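/- Let ω and ν be radial weights such that P_ω : L^∞_ν̂ → H^∞_ν̂ is bounded. Then there exists a constant C = C(ω,ν) > 0 such that (ω/ν̂)_x ≤ C · ω_{2x} / ν̂(1 − 1/x) for all x ≥ 1. -/

import Mathlib

open MeasureTheory Set Complex
open scoped ENNReal

noncomputable section

/-- The open unit disc in the complex plane. -/
def unitDisc : Set ℂ := Metric.ball 0 1

/-- Tail integral `ω̂(r) = ∫_r^1 ω(s) ds`. -/
def tl (ω : ℝ → ℝ) (r : ℝ) : ℝ := ∫ s in r..1, ω s

/-- Moment `ω_x = ∫_0^1 s^x ω(s) ds` (real power in the exponent). -/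
def mom (ω : ℝ → ℝ) (x : ℝ) : ℝ := ∫ s in (0:ℝ)..1, s ^ x * ω s

/-- `ω` is a radial weight: nonnegative and integrable on `[0,1)`, with positive
tail integrals. -/
def IsRadialWeight (ω : ℝ → ℝ) : Prop :=
  (∀ s ∈ Ico (0:ℝ) 1, 0 ≤ ω s) ∧ IntegrableOn ω (Ico (0:ℝ) 1) ∧
    ∀ r ∈ Ico (0:ℝ) 1, 0 < tl ω r

/-- The upper doubling class `D̂`: `sup_{0≤r<1} ω̂(r)/ω̂((1+r)/2) < ∞`. -/
def Dhat (ω : ℝ → ℝ) : Prop :=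
  ∃ C : ℝ, ∀ r ∈ Ico (0:ℝ) 1, tl ω r ≤ C * tl ω ((1 + r) / 2)

/-- The class `Ď`: there are `K > 1`, `C > 1` with `ω̂(r) ≥ C ω̂(1 - (1-r)/K)`. -/
def Dcheck (ω : ℝ → ℝ) : Prop :=
  ∃ K C : ℝ, 1 < K ∧ 1 < C ∧ ∀ r ∈ Ico (0:ℝ) 1, C * tl ω (1 - (1 - r) / K) ≤ tl ω r

/-- The class `D = D̂ ∩ Ď`. -/
def DD (ω : ℝ → ℝ) : Prop := Dhat ω ∧ Dcheck ω

/-- The Bergman reproducing kernel `B^ω_z(ζ) = Σ_n (conj z · ζ)^n / (2 ω_{2n+1})`. -/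
def bKer (ω : ℝ → ℝ) (z ζ : ℂ) : ℂ :=
  ∑' n : ℕ, (starRingEnd ℂ z * ζ) ^ n / ((2 * mom ω (2 * (n : ℝ) + 1) : ℝ) : ℂ)

/-- The integrand of the Bergman projection. -/
def bInt (ω : ℝ → ℝ) (f : ℂ → ℂ) (z ζ : ℂ) : ℂ :=
  f ζ * starRingEnd ℂ (bKer ω z ζ) * ((ω ‖ζ‖ : ℝ) : ℂ)

/-- The Bergman projection `P_ω f(z) = ∫_𝔻 f(ζ) conj(B^ω_z(ζ)) ω(ζ) dA(ζ)`,
where `dA` is normalized area measure `dx dy / π`. -/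
def bProj (ω : ℝ → ℝ) (f : ℂ → ℂ) (z : ℂ) : ℂ :=
  (Real.pi : ℂ)⁻¹ * ∫ ζ in unitDisc, bInt ω f z ζ

/-- The weighted sup-norm `ess sup_{z ∈ 𝔻} |f(z)| v(|z|)`, valued in `ℝ≥0∞`. -/
def wSup (v : ℝ → ℝ) (f : ℂ → ℂ) : ℝ≥0∞ :=
  essSup (fun z => ENNReal.ofReal (‖f z‖ * v ‖z‖)) (volume.restrict unitDisc)

/-- `P_ω : L^∞_v → H^∞_v` is bounded: there is `C > 0` so that for every
`f ∈ L^∞_v` the defining integral converges absolutely at every point of `𝔻`,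
`P_ω f` is analytic on `𝔻`, and `‖P_ω f‖_{L^∞_v} ≤ C ‖f‖_{L^∞_v}`. -/
def ProjBddH (ω v : ℝ → ℝ) : Prop :=
  ∃ C : ℝ, 0 < C ∧ ∀ f : ℂ → ℂ,
    AEStronglyMeasurable f (volume.restrict unitDisc) → wSup v f < ⊤ →
    (∀ z ∈ unitDisc, IntegrableOn (bInt ω f z) unitDisc) ∧
    DifferentiableOn ℂ (bProj ω f) unitDisc ∧
    wSup v (bProj ω f) ≤ ENNReal.ofReal C * wSup v f

/-- `P_ω : L^∞_v → B^∞_v` is bounded: there is `C > 0` so that for every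
`f ∈ L^∞_v` the defining integral converges absolutely at every point of `𝔻`,
`P_ω f` is analytic on `𝔻`, and `‖P_ω f‖_{B^∞_v} ≤ C ‖f‖_{L^∞_v}`. -/
def ProjBddB (ω v : ℝ → ℝ) : Prop :=
  ∃ C : ℝ, 0 < C ∧ ∀ f : ℂ → ℂ,
    AEStronglyMeasurable f (volume.restrict unitDisc) → wSup v f < ⊤ →
    (∀ z ∈ unitDisc, IntegrableOn (bInt ω f z) unitDisc) ∧
    DifferentiableOn ℂ (bProj ω f) unitDisc ∧
    ∀ z ∈ unitDisc,
      ENNReal.ofReal ((1 - ‖z‖) * v ‖z‖ * ‖deriv (bProj ω f) z‖) ≤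
        ENNReal.ofReal C * wSup v f

/-- The moment condition `sup_{x ≥ 0} (ν_x / ω_{2x}) (ω/ν̂)_x < ∞`. -/
def MomCond (ω ν : ℝ → ℝ) : Prop :=
  ∃ C : ℝ, ∀ x : ℝ, 0 ≤ x →
    mom ν x / mom ω (2 * x) * mom (fun s => ω s / tl ν s) x ≤ C

/-- The tail condition `sup_{0 ≤ r < 1} (ν̂(r)/ω̂(r)) ∫_r^1 ω(s)/ν̂(s) ds < ∞`. -/
def TailCond (ω ν : ℝ → ℝ) : Prop :=
  ∃ C : ℝ, ∀ r ∈ Ico (0:ℝ) 1, tl ν r / tl ω r * tl (fun s => ω s / tl ν s) r ≤ C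

lemma wt_int {ω : ℝ → ℝ} (h : IsRadialWeight ω) : IntegrableOn ω (Ioo (0:ℝ) 1) :=
  h.2.1.mono_set Ioo_subset_Ico_self

lemma mom_eq (ω : ℝ → ℝ) (x : ℝ) : mom ω x = ∫ s in Ioo (0:ℝ) 1, s ^ x * ω s := by
  rw [mom, intervalIntegral.integral_of_le zero_le_one, integral_Ioc_eq_integral_Ioo]

lemma tl_eq (ω : ℝ → ℝ) {r : ℝ} (hr : r ≤ 1) : tl ω r = ∫ s in Ioo r 1, ω s := by
  rw [tl, intervalIntegral.integral_of_le hr, integral_Ioc_eq_integral_Ioo]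

lemma tl_cont {ν : ℝ → ℝ} (h : IsRadialWeight ν) : ContinuousOn (tl ν) (Icc 0 1) := by
  have h1 : IntegrableOn ν (uIcc (0:ℝ) 1) := by
    rw [uIcc_of_le zero_le_one, integrableOn_Icc_iff_integrableOn_Ico]
    exact h.2.1
  have := intervalIntegral.continuousOn_primitive_interval_left h1
  rwa [uIcc_of_le zero_le_one] at this

lemma mom_int {ω : ℝ → ℝ} (h : IsRadialWeight ω) {a : ℝ} (ha : 0 ≤ a) :
    IntegrableOn (fun s => s ^ a * ω s) (Ioo (0:ℝ) 1) := by
  refine Integrable.bdd_mul (c := 1) (wt_int h) ?_ ?_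
  · exact (Real.continuous_rpow_const ha).aestronglyMeasurable
  · refine (ae_restrict_iff' measurableSet_Ioo).2 (ae_of_all _ fun s hs => ?_)
    rw [Real.norm_of_nonneg (Real.rpow_nonneg hs.1.le _)]
    exact Real.rpow_le_one hs.1.le hs.2.le ha

lemma mom_lower {ω : ℝ → ℝ} (h : IsRadialWeight ω) {a ρ : ℝ} (ha : 0 ≤ a)
    (h0 : 0 ≤ ρ) (h1 : ρ < 1) : ρ ^ a * tl ω ρ ≤ mom ω a := by
  rw [mom_eq, tl_eq ω h1.le, ← integral_const_mul]
  have hsub : Ioo ρ 1 ⊆ Ioo (0:ℝ) 1 := Ioo_subset_Ioo_left h0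
  calc ∫ s in Ioo ρ 1, ρ ^ a * ω s ≤ ∫ s in Ioo ρ 1, s ^ a * ω s := by
        refine setIntegral_mono_on (((wt_int h).mono_set hsub).const_mul _)
          ((mom_int h ha).mono_set hsub) measurableSet_Ioo fun s hs => ?_
        have := h.1 s ⟨(hsub hs).1.le, hs.2⟩
        have := Real.rpow_le_rpow h0 hs.1.le ha
        gcongr
    _ ≤ ∫ s in Ioo 0 1, s ^ a * ω s := by
        refine setIntegral_mono_set (mom_int h ha) ?_ (LE.le.eventuallyLE hsub)
        refine (ae_restrict_iff' measurableSet_Ioo).2 (ae_of_all _ fun s hs => ?_)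
        exact mul_nonneg (Real.rpow_nonneg hs.1.le _) (h.1 s ⟨hs.1.le, hs.2⟩)

lemma mom_pos {ω : ℝ → ℝ} (h : IsRadialWeight ω) {a : ℝ} (ha : 0 ≤ a) : 0 < mom ω a := by
  refine lt_of_lt_of_le ?_ (mom_lower h (ρ := 1/2) ha (by norm_num) (by norm_num))
  have := h.2.2 (1/2) ⟨by norm_num, by norm_num⟩
  positivity

lemma mom_shift {ω : ℝ → ℝ} (h : IsRadialWeight ω) :
    ∃ K : ℝ, 0 < K ∧ ∀ a b : ℝ, 0 ≤ a → a ≤ b → b ≤ a + 3 → mom ω a ≤ K * mom ω b := by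
  have t0 := h.2.2 0 ⟨le_rfl, zero_lt_one⟩
  have t1 := h.2.2 (1/2) ⟨by norm_num, by norm_num⟩
  refine ⟨8 + 8 * (tl ω 0 / tl ω (1/2)), by positivity, fun a b ha hab hb => ?_⟩
  have hb0 : 0 ≤ b := ha.trans hab
  have key : (1/2:ℝ) ^ a ≤ 8 * (1/2:ℝ) ^ b := by
    have : (1/2:ℝ) ^ (a + 3) ≤ (1/2:ℝ) ^ b :=
      Real.rpow_le_rpow_of_exponent_ge (by norm_num) (by norm_num) hb
    rw [Real.rpow_add (by norm_num)] at this
    norm_num at this ⊢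
    linarith
  have e1 : mom ω a ≤ 8 * mom ω b + (1/2:ℝ) ^ a * tl ω 0 := by
    rw [mom_eq, mom_eq, tl_eq ω zero_le_one, ← integral_const_mul, ← integral_const_mul,
      ← integral_add ((mom_int h hb0).const_mul _) ((wt_int h).const_mul _)]
    refine setIntegral_mono_on (mom_int h ha)
      (((mom_int h hb0).const_mul _).add ((wt_int h).const_mul _)) measurableSet_Ioo fun s hs => ?_
    have hw := h.1 s ⟨hs.1.le, hs.2⟩
    have : s ^ a ≤ 8 * s ^ b + (1/2:ℝ) ^ a := by
      rcases le_total s (1/2) with hs2 | hs2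
      · have := Real.rpow_le_rpow hs.1.le hs2 ha
        have := Real.rpow_nonneg hs.1.le b
        linarith
      · have h3 : s ^ (a + 3) ≤ s ^ b :=
          Real.rpow_le_rpow_of_exponent_ge hs.1 hs.2.le hb
        rw [Real.rpow_add hs.1] at h3
        have h4 : (1/8:ℝ) ≤ s ^ (3:ℝ) := by
          have := Real.rpow_le_rpow (by norm_num) hs2 (by norm_num : (0:ℝ) ≤ 3)
          norm_num at this ⊢
          linarith
        have h5 := Real.rpow_nonneg hs.1.le a
        have : (0:ℝ) ≤ (1/2:ℝ) ^ a := by positivity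
        nlinarith
    nlinarith
  have e2 := mom_lower h (ρ := 1/2) hb0 (by norm_num) (by norm_num)
  have e3 : (1/2:ℝ) ^ a * tl ω 0 ≤ 8 * (tl ω 0 / tl ω (1/2)) * mom ω b := by
    calc (1/2:ℝ) ^ a * tl ω 0 ≤ (8 * (1/2:ℝ) ^ b) * tl ω 0 := by gcongr
      _ = 8 * (tl ω 0 / tl ω (1/2)) * ((1/2:ℝ) ^ b * tl ω (1/2)) := by field_simp
      _ ≤ _ := by gcongr
  linarith

lemma ker_summable {ω : ℝ → ℝ} (h : IsRadialWeight ω) {t : ℝ} (t0 : 0 ≤ t) (t1 : t < 1) :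
    Summable fun k : ℕ => t ^ k / (2 * mom ω (2 * (k:ℝ) + 1)) := by
  set ρ := (1 + t) / 2 with hρ
  have r0 : 0 < ρ := by positivity
  have r1 : ρ < 1 := by rw [hρ]; linarith
  have hT := h.2.2 ρ ⟨r0.le, r1⟩
  have hlt : t / ρ ^ 2 < 1 := by
    rw [div_lt_one (by positivity), hρ]
    nlinarith [sq_pos_of_pos (sub_pos.2 t1)]
  have hs := (summable_geometric_of_lt_one (by positivity) hlt).mul_right (1 / (2 * (ρ * tl ω ρ)))
  refine Summable.of_nonneg_of_le (fun k => ?_) (fun k => ?_) hs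
  · have := mom_pos h (a := 2 * (k:ℝ) + 1) (by positivity)
    positivity
  · have := mom_lower h (a := 2 * (k:ℝ) + 1) (by positivity) r0.le r1
    have e : ρ ^ (2 * (k:ℝ) + 1) = (ρ ^ 2) ^ k * ρ := by
      rw [Real.rpow_add r0, Real.rpow_one, Real.rpow_mul r0.le, Real.rpow_natCast]
      norm_num
    rw [e] at this
    calc t ^ k / (2 * mom ω (2 * (k:ℝ) + 1)) ≤ t ^ k / (2 * ((ρ ^ 2) ^ k * ρ * tl ω ρ)) := by
          gcongr
      _ = _ := by clear_value ρ; rw [div_pow]; field_simp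

/-- The test function. -/
def tf (ν : ℝ → ℝ) (n : ℕ) (ζ : ℂ) : ℂ := (ζ / (‖ζ‖ : ℂ)) ^ n * (((tl ν ‖ζ‖)⁻¹ : ℝ) : ℂ)

lemma phase_norm (ζ : ℂ) : ‖ζ / (‖ζ‖ : ℂ)‖ ≤ 1 := by
  simp [div_self_le_one]

lemma tf_meas {ν : ℝ → ℝ} (hν : IsRadialWeight ν) (n : ℕ) :
    AEStronglyMeasurable (tf ν n) (volume.restrict unitDisc) := by
  refine AEStronglyMeasurable.mul ?_ ?_
  · have : Measurable fun ζ : ℂ => (ζ / (‖ζ‖ : ℂ)) ^ n := by fun_prop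
    exact this.aestronglyMeasurable
  · have h : ContinuousOn (fun ζ : ℂ => (((tl ν ‖ζ‖)⁻¹ : ℝ) : ℂ)) unitDisc := by
      refine Complex.continuous_ofReal.comp_continuousOn (ContinuousOn.inv₀ ?_ ?_)
      · refine (tl_cont hν).comp continuous_norm.continuousOn fun ζ hζ => ?_
        exact ⟨norm_nonneg _, (mem_ball_zero_iff.1 hζ).le⟩
      · intro ζ hζ
        exact (hν.2.2 _ ⟨norm_nonneg _, mem_ball_zero_iff.1 hζ⟩).ne'
    exact h.aestronglyMeasurable Metric.isOpen_ball.measurableSet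

lemma tf_sup {ν : ℝ → ℝ} (hν : IsRadialWeight ν) (n : ℕ) : wSup (tl ν) (tf ν n) ≤ 1 := by
  refine essSup_le_of_ae_le _ ?_
  refine (ae_restrict_iff' Metric.isOpen_ball.measurableSet).2 (ae_of_all _ fun ζ hζ => ?_)
  have h := hν.2.2 _ ⟨norm_nonneg _, mem_ball_zero_iff.1 hζ⟩
  rw [ENNReal.ofReal_le_one, tf, norm_mul, norm_pow, Complex.norm_real,
    Real.norm_of_nonneg (inv_nonneg.2 h.le), mul_assoc, inv_mul_cancel₀ h.ne', mul_one]
  exact pow_le_one₀ (norm_nonneg _) (phase_norm _)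

lemma radial_integrable {ω ν : ℝ → ℝ} (hω : IsRadialWeight ω) (hν : IsRadialWeight ν)
    (hb : ProjBddH ω (tl ν)) :
    IntegrableOn (fun ζ : ℂ => ω ‖ζ‖ / tl ν ‖ζ‖) unitDisc := by
  obtain ⟨C, hC, H⟩ := hb
  have h1 := (H (tf ν 0) (tf_meas hν 0) ((tf_sup hν 0).trans_lt ENNReal.one_lt_top)).1 0
    (Metric.mem_ball_self one_pos)
  have hm := mom_pos hω (a := 1) zero_le_one
  have hk : ∀ ζ, bKer ω 0 ζ = (((2 * mom ω 1)⁻¹ : ℝ) : ℂ) := by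
    intro ζ
    rw [bKer, tsum_eq_single 0]
    · simp
    · intro n hn
      simp [hn]
  have h2 := (h1.re).const_mul (2 * mom ω 1)
  refine h2.congr (ae_of_all _ fun ζ => ?_)
  have : bInt ω (tf ν 0) 0 ζ = (((tl ν ‖ζ‖)⁻¹ * (2 * mom ω 1)⁻¹ * ω ‖ζ‖ : ℝ) : ℂ) := by
    rw [bInt, hk, tf, Complex.conj_ofReal]
    push_cast
    ring
  simp only [this]
  simp only [RCLike.re_to_complex, Complex.ofReal_re]
  field_simp

/-- The `k`-th term of the expansion of the Bergman integrand. -/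
def trm (g : ℝ → ℝ) (n k : ℕ) (ζ : ℂ) : ℂ :=
  (ζ / (‖ζ‖ : ℂ)) ^ n * (starRingEnd ℂ ζ) ^ k * ((g ‖ζ‖ : ℝ) : ℂ)

lemma trm_int {g : ℝ → ℝ} (hg : IntegrableOn (fun ζ : ℂ => g ‖ζ‖) unitDisc) (n k : ℕ) :
    IntegrableOn (trm g n k) unitDisc := by
  refine Integrable.bdd_mul (c := 1) hg.ofReal ?_ ?_
  · have : Measurable fun ζ : ℂ => (ζ / (‖ζ‖ : ℂ)) ^ n * (starRingEnd ℂ ζ) ^ k := by fun_prop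
    exact this.aestronglyMeasurable
  · refine (ae_restrict_iff' Metric.isOpen_ball.measurableSet).2 (ae_of_all _ fun ζ hζ => ?_)
    rw [norm_mul, norm_pow, norm_pow, RCLike.norm_conj]
    exact mul_le_one₀ (pow_le_one₀ (norm_nonneg _) (phase_norm _)) (by positivity)
      (pow_le_one₀ (norm_nonneg _) (mem_ball_zero_iff.1 hζ).le)

lemma trm_norm (g : ℝ → ℝ) (n k : ℕ) {ζ : ℂ} (hζ : ζ ∈ unitDisc) :
    ‖trm g n k ζ‖ ≤ ‖g ‖ζ‖‖ := by
  rw [trm, norm_mul, norm_mul, norm_pow, norm_pow, RCLike.norm_conj, Complex.norm_real]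
  exact mul_le_of_le_one_left (norm_nonneg _)
    (mul_le_one₀ (pow_le_one₀ (norm_nonneg _) (phase_norm _)) (by positivity)
      (pow_le_one₀ (norm_nonneg _) (mem_ball_zero_iff.1 hζ).le))

lemma trm_zero (g : ℝ → ℝ) {n k : ℕ} (hnk : k ≠ n) : ∫ ζ in unitDisc, trm g n k ζ = 0 := by
  set u : Circle := Circle.exp (Real.pi / ((n:ℝ) - k)) with hu
  have hd : (n:ℂ) - k ≠ 0 := by
    rw [sub_ne_zero]; exact_mod_cast hnk.symm
  have hu1 : (u : ℂ) ^ n * (starRingEnd ℂ (u:ℂ)) ^ k = -1 := by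
    rw [← Circle.coe_inv_eq_conj, hu, ← Circle.exp_neg, Circle.coe_exp, Circle.coe_exp,
      ← Complex.exp_nat_mul, ← Complex.exp_nat_mul, ← Complex.exp_add, ← Complex.exp_pi_mul_I]
    congr 1
    push_cast
    field_simp
    ring
  have hmp := (rotation u).measurePreserving
  have hinv := hmp.setIntegral_preimage_emb
    (rotation u).toHomeomorph.measurableEmbedding (trm g n k) unitDisc
  have hpre : (rotation u) ⁻¹' unitDisc = unitDisc := by
    ext ζ
    rw [mem_preimage, unitDisc, mem_ball_zero_iff, mem_ball_zero_iff, LinearIsometryEquiv.norm_map]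
  have hpt : ∀ ζ, trm g n k (rotation u ζ) = -trm g n k ζ := by
    intro ζ
    simp only [trm, rotation_apply, norm_mul, Circle.norm_coe, one_mul, map_mul]
    calc _ = ((u : ℂ) ^ n * (starRingEnd ℂ (u:ℂ)) ^ k) *
          ((ζ / (‖ζ‖ : ℂ)) ^ n * (starRingEnd ℂ ζ) ^ k * ((g ‖ζ‖ : ℝ) : ℂ)) := by
            rw [mul_div_assoc, mul_pow, mul_pow]; ring
      _ = _ := by rw [hu1]; ring
  rw [hpre] at hinv
  simp only [hpt] at hinv
  rw [integral_neg] at hinv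
  have h2 : (2:ℂ) * ∫ ζ in unitDisc, trm g n k ζ = 0 := by linear_combination -hinv
  simpa using h2

lemma trm_diag (g : ℝ → ℝ) (n : ℕ) :
    ∫ ζ in unitDisc, trm g n n ζ = ((2 * Real.pi * mom g ((n:ℝ) + 1) : ℝ) : ℂ) := by
  have e1 : ∀ ζ, trm g n n ζ = ((‖ζ‖ ^ n * g ‖ζ‖ : ℝ) : ℂ) := by
    intro ζ
    rw [trm, ← mul_pow]
    have : ζ / (‖ζ‖ : ℂ) * (starRingEnd ℂ ζ) = (‖ζ‖ : ℂ) := by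
      by_cases h : ζ = 0
      · simp [h]
      · have : (‖ζ‖ : ℂ) ≠ 0 := by simpa using h
        rw [div_mul_eq_mul_div, Complex.mul_conj']
        field_simp
    rw [this]; push_cast; ring
  simp only [e1]
  refine (integral_ofReal (𝕜 := ℂ)).trans (congrArg _ ?_)
  change ∫ ζ in unitDisc, ‖ζ‖ ^ n * g ‖ζ‖ = 2 * Real.pi * mom g ((n:ℝ) + 1)
  have := integral_fun_norm_addHaar (volume : Measure ℂ) ((Iio (1:ℝ)).indicator fun s => s ^ n * g s)
  rw [Complex.finrank_real_complex] at this
  have hball : (volume : Measure ℂ).real (Metric.ball 0 1) = Real.pi := by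
    simp [Measure.real, Complex.volume_ball]
  rw [hball] at this
  have l : ∫ ζ in unitDisc, ‖ζ‖ ^ n * g ‖ζ‖ =
      ∫ x : ℂ, (Iio (1:ℝ)).indicator (fun s => s ^ n * g s) ‖x‖ := by
    have hD : MeasurableSet unitDisc := Metric.isOpen_ball.measurableSet
    rw [← integral_indicator hD]
    congr 1
    ext ζ
    simp [indicator, unitDisc]
  rw [l, this]
  have r : ∫ y in Ioi (0:ℝ), y ^ (2 - 1) • (Iio (1:ℝ)).indicator (fun s => s ^ n * g s) y
      = mom g ((n:ℝ) + 1) := by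
    rw [mom_eq, ← Ioi_inter_Iio, ← setIntegral_indicator measurableSet_Iio]
    refine setIntegral_congr_fun measurableSet_Ioi fun y hy => ?_
    have hy0 : (0:ℝ) < y := hy
    by_cases h : y < 1
    · simp only [mem_Iio, h, indicator_of_mem, smul_eq_mul]
      rw [Real.rpow_add hy0, Real.rpow_natCast, Real.rpow_one]
      ring
    · simp [h]
  rw [r]
  simp only [nsmul_eq_mul, smul_eq_mul]
  push_cast
  ring

lemma proj_tf {ω ν : ℝ → ℝ} (hω : IsRadialWeight ω)
    (hg : IntegrableOn (fun ζ : ℂ => ω ‖ζ‖ / tl ν ‖ζ‖) unitDisc) (n : ℕ) {z : ℂ}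
    (hz : z ∈ unitDisc) :
    bProj ω (tf ν n) z =
      z ^ n * ((mom (fun s => ω s / tl ν s) ((n:ℝ) + 1) / mom ω (2 * (n:ℝ) + 1) : ℝ) : ℂ) := by
  set g : ℝ → ℝ := fun s => ω s / tl ν s with hgdef
  set c : ℕ → ℝ := fun k => 2 * mom ω (2 * (k:ℝ) + 1) with hc
  have hcpos : ∀ k, 0 < c k := fun k => by
    have := mom_pos hω (a := 2 * (k:ℝ) + 1) (by positivity)
    simp only [hc]; positivity
  have hz1 : ‖z‖ < 1 := mem_ball_zero_iff.1 hz
  have hexp : ∀ ζ, bInt ω (tf ν n) z ζ = ∑' k, (z ^ k / (c k : ℂ)) * trm g n k ζ := by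
    intro ζ
    rw [bInt, bKer, Complex.conj_tsum, ← tsum_mul_left, ← tsum_mul_right]
    refine tsum_congr fun k => ?_
    simp only [map_div₀, map_pow, map_mul, Complex.conj_conj, Complex.conj_ofReal, tf, trm, hgdef, hc]
    push_cast
    ring
  have hint : ∀ k, Integrable (fun ζ => (z ^ k / (c k : ℂ)) * trm g n k ζ)
      (volume.restrict unitDisc) := fun k => (trm_int hg n k).const_mul _
  have hsum : Summable fun k => ∫ ζ in unitDisc, ‖(z ^ k / (c k : ℂ)) * trm g n k ζ‖ := by
    refine Summable.of_nonneg_of_le (fun k => by positivity) (fun k => ?_)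
      ((ker_summable hω (norm_nonneg z) hz1).mul_right (∫ ζ in unitDisc, ‖g ‖ζ‖‖))
    rw [← integral_const_mul]
    refine setIntegral_mono_on (hint k).norm (Integrable.const_mul hg.norm _)
      Metric.isOpen_ball.measurableSet fun ζ hζ => ?_
    rw [norm_mul, norm_div, norm_pow, Complex.norm_real, Real.norm_of_nonneg (hcpos k).le]
    have := hcpos k
    exact mul_le_mul_of_nonneg_left (trm_norm g n k hζ) (by positivity)
  have hS := integral_tsum_of_summable_integral_norm hint hsum
  rw [bProj]
  simp only [hexp]
  rw [← hS, tsum_eq_single n]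
  · rw [integral_const_mul, trm_diag]
    have h1 : (mom ω (2 * (n:ℝ) + 1) : ℂ) ≠ 0 := by
      exact_mod_cast (mom_pos hω (a := 2 * (n:ℝ) + 1) (by positivity)).ne'
    have h2 : (Real.pi : ℂ) ≠ 0 := by exact_mod_cast Real.pi_ne_zero
    simp only [hc]
    push_cast
    field_simp
  · intro k hk
    rw [integral_const_mul, trm_zero g hk, mul_zero]

lemma sup_bound {ω ν : ℝ → ℝ} (hω : IsRadialWeight ω) (hν : IsRadialWeight ν)
    (hb : ProjBddH ω (tl ν)) :
    ∃ C : ℝ, 0 < C ∧ ∀ (n : ℕ) (r : ℝ), 0 ≤ r → r < 1 →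
      r ^ n * tl ν r * mom (fun s => ω s / tl ν s) ((n:ℝ) + 1) ≤ C * mom ω (2 * (n:ℝ) + 1) := by
  have hg := radial_integrable hω hν hb
  obtain ⟨C, hC, H⟩ := hb
  refine ⟨C, hC, fun n r r0 r1 => ?_⟩
  have hm := mom_pos hω (a := 2 * (n:ℝ) + 1) (by positivity)
  set A := mom (fun s => ω s / tl ν s) ((n:ℝ) + 1) / mom ω (2 * (n:ℝ) + 1) with hA
  have h1 := (H (tf ν n) (tf_meas hν n) ((tf_sup hν n).trans_lt ENNReal.one_lt_top)).2.2
  have h2 : wSup (tl ν) (bProj ω (tf ν n)) ≤ ENNReal.ofReal C :=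
    h1.trans (mul_le_of_le_one_right' (tf_sup hν n))
  set φ : ℂ → ℝ := fun z => ‖z‖ ^ n * tl ν ‖z‖ * A with hφ
  have hcont : ContinuousOn φ unitDisc := by
    have : ContinuousOn (fun z : ℂ => tl ν ‖z‖) unitDisc :=
      (tl_cont hν).comp continuous_norm.continuousOn fun ζ hζ =>
        ⟨norm_nonneg _, (mem_ball_zero_iff.1 hζ).le⟩
    exact ((continuous_norm.pow n).continuousOn.mul this).mul continuousOn_const
  have hae : ∀ᵐ z ∂(volume.restrict unitDisc), φ z ≤ C := by
    filter_upwards [ENNReal.ae_le_essSup (μ := volume.restrict unitDisc)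
      (fun z => ENNReal.ofReal (‖bProj ω (tf ν n) z‖ * tl ν ‖z‖)),
      ae_restrict_mem Metric.isOpen_ball.measurableSet] with z hz hzD
    have h3 := (ENNReal.ofReal_le_ofReal_iff hC.le).1 (hz.trans h2)
    have ht := hν.2.2 _ ⟨norm_nonneg _, mem_ball_zero_iff.1 hzD⟩
    rw [proj_tf hω hg n hzD, norm_mul, norm_pow, Complex.norm_real] at h3
    refine le_trans ?_ h3
    rw [hφ]
    simp only
    rw [mul_right_comm]
    gcongr
    exact Real.le_norm_self _
  have hopen : IsOpen (unitDisc ∩ φ ⁻¹' Ioi C) :=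
    hcont.isOpen_inter_preimage Metric.isOpen_ball isOpen_Ioi
  have hzero : volume (unitDisc ∩ φ ⁻¹' Ioi C) = 0 := by
    have hD : MeasurableSet unitDisc := Metric.isOpen_ball.measurableSet
    rw [ae_restrict_iff' hD, ae_iff] at hae
    refine measure_mono_null (fun z hz => ?_) hae
    simp only [mem_ofPred_eq, Classical.not_imp, not_le]
    exact ⟨hz.1, hz.2⟩
  have hempty := (hopen.measure_eq_zero_iff volume).1 hzero
  have hr : φ (r : ℂ) ≤ C := by
    by_contra hcon
    have : (r : ℂ) ∈ unitDisc ∩ φ ⁻¹' Ioi C := by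
      refine ⟨mem_ball_zero_iff.2 ?_, not_le.1 hcon⟩
      rwa [Complex.norm_real, Real.norm_of_nonneg r0]
    rw [hempty] at this
    exact this
  rw [hφ] at hr
  simp only [Complex.norm_real, Real.norm_of_nonneg r0] at hr
  rw [hA, ← mul_div_assoc, div_le_iff₀ hm] at hr
  exact hr

lemma mom_anti {ω ν : ℝ → ℝ} (hω : IsRadialWeight ω) (hν : IsRadialWeight ν)
    (hg : IntegrableOn (fun ζ : ℂ => ω ‖ζ‖ / tl ν ‖ζ‖) unitDisc) (n : ℕ) {x : ℝ}
    (hx : (n:ℝ) + 1 ≤ x) :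
    mom (fun s => ω s / tl ν s) x ≤ mom (fun s => ω s / tl ν s) ((n:ℝ) + 1) := by
  have h1 := (integrableOn_fun_norm_addHaar (E := ℂ) volume (f := fun s => ω s / tl ν s)).1 hg
  rw [Complex.finrank_real_complex] at h1
  rw [mom_eq, mom_eq]
  have hnn : ∀ s ∈ Ioo (0:ℝ) 1, 0 ≤ ω s / tl ν s := fun s hs =>
    div_nonneg (hω.1 s ⟨hs.1.le, hs.2⟩) (hν.2.2 s ⟨hs.1.le, hs.2⟩).le
  refine integral_mono_of_nonneg ?_ ?_ ?_
  · refine (ae_restrict_iff' measurableSet_Ioo).2 (ae_of_all _ fun s hs => ?_)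
    exact mul_nonneg (Real.rpow_nonneg hs.1.le _) (hnn s hs)
  · have h2 : IntegrableOn (fun s : ℝ => s ^ n * (s ^ (2 - 1) • (ω s / tl ν s))) (Ioo (0:ℝ) 1) := by
      refine Integrable.bdd_mul (c := 1) h1 (by fun_prop) ?_
      refine (ae_restrict_iff' measurableSet_Ioo).2 (ae_of_all _ fun s hs => ?_)
      rw [Real.norm_of_nonneg (pow_nonneg hs.1.le _)]
      exact pow_le_one₀ hs.1.le hs.2.le
    refine h2.congr_fun (fun s hs => ?_) measurableSet_Ioo
    simp only [smul_eq_mul]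
    rw [Real.rpow_add hs.1, Real.rpow_natCast, Real.rpow_one]
    ring
  · refine (ae_restrict_iff' measurableSet_Ioo).2 (ae_of_all _ fun s hs => ?_)
    exact mul_le_mul_of_nonneg_right
      (Real.rpow_le_rpow_of_exponent_ge hs.1 hs.2.le hx) (hnn s hs)

lemma pow_low (n : ℕ) {x : ℝ} (hx : (n:ℝ) + 1 ≤ x) : 1 ≤ Real.exp 1 * (1 - 1 / x) ^ n := by
  rcases Nat.eq_zero_or_pos n with rfl | hn
  · simp
  have hn' : (0:ℝ) < n := by exact_mod_cast hn
  have h1 : (n:ℝ) / (n + 1) ≤ 1 - 1 / x := by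
    have : 1 / x ≤ 1 / ((n:ℝ) + 1) := one_div_le_one_div_of_le (by positivity) hx
    have e : (n:ℝ) / (n + 1) = 1 - 1 / ((n:ℝ) + 1) := by field_simp; ring
    rw [e]; linarith
  have h2 : (1 + 1 / (n:ℝ)) ^ n ≤ Real.exp 1 := by
    calc (1 + 1 / (n:ℝ)) ^ n ≤ (Real.exp (1 / n)) ^ n := by
          gcongr
          linarith [Real.add_one_le_exp (1 / (n:ℝ))]
      _ = Real.exp 1 := by
          rw [← Real.exp_nat_mul]; congr 1; field_simp
  calc (1:ℝ) = (1 + 1 / (n:ℝ)) ^ n * ((n:ℝ) / (n + 1)) ^ n := by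
        rw [← mul_pow]
        have : (1 + 1 / (n:ℝ)) * ((n:ℝ) / (n + 1)) = 1 := by field_simp
        rw [this, one_pow]
    _ ≤ _ := by gcongr

/-- Proposition 3.3: if `P_ω : L^∞_ν̂ → H^∞_ν̂` is bounded, then
`(ω/ν̂)_x ≤ C ω_{2x} / ν̂(1 - 1/x)` for all `x ≥ 1`. -/
theorem stmt14 (ω ν : ℝ → ℝ) (hω : IsRadialWeight ω) (hν : IsRadialWeight ν)
    (hb : ProjBddH ω (tl ν)) :
    ∃ C : ℝ, 0 < C ∧ ∀ x : ℝ, 1 ≤ x →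
      mom (fun s => ω s / tl ν s) x ≤ C * mom ω (2 * x) / tl ν (1 - 1 / x) := by
  obtain ⟨C, hC, hS⟩ := sup_bound hω hν hb
  obtain ⟨K, hK, hKb⟩ := mom_shift hω
  have hg := radial_integrable hω hν hb
  refine ⟨Real.exp 1 * (C * K), by positivity, fun x hx => ?_⟩
  have hx0 : 0 < x := by linarith
  obtain ⟨n, hn1, hn2⟩ : ∃ n : ℕ, (n:ℝ) + 1 ≤ x ∧ x ≤ (n:ℝ) + 2 := by
    have hf1 : 1 ≤ ⌊x⌋₊ := Nat.one_le_floor_iff x |>.2 hx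
    refine ⟨⌊x⌋₊ - 1, ?_, ?_⟩
    · rw [Nat.cast_sub hf1]; push_cast
      linarith [Nat.floor_le hx0.le]
    · rw [Nat.cast_sub hf1]; push_cast
      linarith [Nat.lt_floor_add_one x]
  have r0 : 0 ≤ 1 - 1 / x := by
    rw [sub_nonneg, div_le_one hx0]; exact hx
  have r1 : 1 - 1 / x < 1 := by
    have : 0 < 1 / x := by positivity
    linarith
  have ht := hν.2.2 _ ⟨r0, r1⟩
  set r := 1 - 1 / x with hr
  set M := mom (fun s => ω s / tl ν s) ((n:ℝ) + 1) with hM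
  have hM0 : 0 ≤ M := by
    rw [hM, mom_eq]
    refine setIntegral_nonneg measurableSet_Ioo fun s hs => ?_
    exact mul_nonneg (Real.rpow_nonneg hs.1.le _)
      (div_nonneg (hω.1 s ⟨hs.1.le, hs.2⟩) (hν.2.2 s ⟨hs.1.le, hs.2⟩).le)
  have a1 := mom_anti hω hν hg n hn1
  have a2 := hS n r r0 r1
  have a3 := pow_low n hn1
  have a4 := hKb (2 * (n:ℝ) + 1) (2 * x) (by positivity) (by linarith) (by linarith)
  rw [le_div_iff₀ ht]
  calc mom (fun s => ω s / tl ν s) x * tl ν r ≤ M * tl ν r := by gcongr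
    _ = 1 * (tl ν r * M) := by ring
    _ ≤ (Real.exp 1 * r ^ n) * (tl ν r * M) := by gcongr
    _ = Real.exp 1 * (r ^ n * tl ν r * M) := by ring
    _ ≤ Real.exp 1 * (C * mom ω (2 * (n:ℝ) + 1)) := by gcongr
    _ ≤ Real.exp 1 * (C * (K * mom ω (2 * x))) := by gcongr
    _ = _ := by ring
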